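/- Let K be a set of density matrices on ℂ^d that admits a preparation-and-measurement noncontextual model. For t ∈ {1,2,3} and b ∈ {0,1}, let σ_{t,b} ∈ cone(K) be such that (σ_{t,0} + σ_{t,1})/2 equals one fixed matrix σ_* for all t, and let M_{t,b} be positive semidefinite d×d matrices such that M_{t,0} + M_{t,1} = I for each t and (1/3) ∑_{t=1}^3 M_{t,b} = I/2 for each b. Then ∑_{t=1}^3 ∑_{b=0}^1 Tr(σ_{t,b} M_{t,b}) ≤ 5 Tr(σ_*). -/

import Mathlib

open Matrix
open scoped Kronecker ComplexOrder BigOperators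

noncomputable section

/-- A density matrix: positive semidefinite with trace 1. -/
def IsDensity {d : Type*} [Fintype d] [DecidableEq d] (ρ : Matrix d d ℂ) : Prop :=
  ρ.PosSemidef ∧ ρ.trace = 1

/-- Partial trace over the second (B) factor. -/
def trB {m n : ℕ} (ρ : Matrix (Fin m × Fin n) (Fin m × Fin n) ℂ) :
    Matrix (Fin m) (Fin m) ℂ := fun i j => ∑ k, ρ (i, k) (j, k)

/-- Partial trace over the first (A) factor. -/
def trA {m n : ℕ} (ρ : Matrix (Fin m × Fin n) (Fin m × Fin n) ℂ) :
    Matrix (Fin n) (Fin n) ℂ := fun k l => ∑ i, ρ (i, k) (i, l)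

/-- The set of states remotely preparable on Alice's side. -/
def LambdaA {m n : ℕ} (ρ : Matrix (Fin m × Fin n) (Fin m × Fin n) ℂ) :
    Set (Matrix (Fin m) (Fin m) ℂ) :=
  {σ | IsDensity σ ∧ ∃ E : Matrix (Fin n) (Fin n) ℂ, E.PosSemidef ∧
    σ = trB (((1 : Matrix (Fin m) (Fin m) ℂ) ⊗ₖ E) * ρ)}

/-- The set of states remotely preparable on Bob's side. -/
def LambdaB {m n : ℕ} (ρ : Matrix (Fin m × Fin n) (Fin m × Fin n) ℂ) :
    Set (Matrix (Fin n) (Fin n) ℂ) :=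
  {σ | IsDensity σ ∧ ∃ E : Matrix (Fin m) (Fin m) ℂ, E.PosSemidef ∧
    σ = trA ((E ⊗ₖ (1 : Matrix (Fin n) (Fin n) ℂ)) * ρ)}

/-- A preparation-and-measurement noncontextual model for a set `K` of density matrices. -/
def HasNCModel {d : ℕ} (K : Set (Matrix (Fin d) (Fin d) ℂ)) : Prop :=
  ∃ (L : ℕ) (N ω : Fin L → Matrix (Fin d) (Fin d) ℂ),
    (∀ l, (N l).IsHermitian) ∧ (∀ l, IsDensity (ω l)) ∧
    (∀ ρ ∈ K, ∀ l, 0 ≤ (ρ * N l).trace) ∧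
    (∀ ρ ∈ K, ∑ l, (ρ * N l).trace = 1) ∧
    (∀ ρ ∈ K, ∀ M : Matrix (Fin d) (Fin d) ℂ, M.PosSemidef → (1 - M).PosSemidef →
      (ρ * M).trace = ∑ l, (ρ * N l).trace * (ω l * M).trace)

/-- Separability of a bipartite density matrix. -/
def Separable {m n : ℕ} (ρ : Matrix (Fin m × Fin n) (Fin m × Fin n) ℂ) : Prop :=
  ∃ (L : ℕ) (ω : Fin L → Matrix (Fin m) (Fin m) ℂ)
    (κ : Fin L → Matrix (Fin n) (Fin n) ℂ),
    (∀ l, IsDensity (ω l)) ∧ (∀ l, (κ l).PosSemidef) ∧ ρ = ∑ l, ω l ⊗ₖ κ l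

/-- The cone generated by a set of density matrices: nonnegative real multiples. -/
def coneOf {d : ℕ} (K : Set (Matrix (Fin d) (Fin d) ℂ)) : Set (Matrix (Fin d) (Fin d) ℂ) :=
  {x | ∃ (μ : ℝ) (σ : Matrix (Fin d) (Fin d) ℂ), 0 ≤ μ ∧ σ ∈ K ∧ x = (μ : ℂ) • σ}

/-!
In a noncontextual model each hidden state `l` turns preparations and measurements into nonnegative
numbers `p l (σ t b)` and `q l (M t b)`, so it suffices to prove the inequality for each `l`
separately and to sum. For fixed `l` the weights `p l (σ t 0)` and `p l (σ t 1)` add up to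
`2 * p l σs`, so setting `t` contributes at most `p l σs * (1 + |δ t|)`, where
`δ t = q l (M t 0) - q l (M t 1)` lies in `[-1, 1]`. The averaging condition says `∑ t, δ t = 0`,
and for an odd number of settings this keeps the `|δ t|` from all being `1`: their sum is at most
the number of settings minus one.
-/

section OrderedRing

variable {ι R : Type*} {s : Finset ι}

theorem sum_abs_le_of_sum_eq_zero_of_odd_card [Ring R] [LinearOrder R] [IsStrictOrderedRing R]
    {y : ι → R} {c : R} (hs : Odd s.card) (hbound : ∀ i ∈ s, |y i| ≤ c)
    (hsum : ∑ i ∈ s, y i = 0) : ∑ i ∈ s, |y i| ≤ (s.card - 1) * c := by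
  obtain ⟨k, hk⟩ := hs
  obtain ⟨i₀, hi₀⟩ : s.Nonempty := Finset.card_pos.mp (by lia)
  have hc : 0 ≤ c := (abs_nonneg _).trans (hbound i₀ hi₀)
  set P := s.filter (0 ≤ y ·)
  set Q := s.filter (¬ 0 ≤ y ·)
  have hsplit (f : ι → R) : ∑ i ∈ P, f i + ∑ i ∈ Q, f i = ∑ i ∈ s, f i :=
    Finset.sum_filter_add_sum_filter_not s _ f
  have hcard : P.card + Q.card = s.card := Finset.card_filter_add_card_filter_not _
  have hP : ∑ i ∈ P, |y i| = ∑ i ∈ P, y i :=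
    Finset.sum_congr rfl fun i hi ↦ abs_of_nonneg (Finset.mem_filter.mp hi).2
  have hQ : ∑ i ∈ Q, |y i| = -∑ i ∈ Q, y i := by
    rw [← Finset.sum_neg_distrib]
    exact Finset.sum_congr rfl fun i hi ↦ abs_of_neg (not_le.mp (Finset.mem_filter.mp hi).2)
  have hPQ : ∑ i ∈ P, |y i| = ∑ i ∈ Q, |y i| := by
    rw [hP, hQ, eq_neg_iff_add_eq_zero, hsplit, hsum]
  have hsmall {T : Finset ι} (hT : T ⊆ s) (hTk : T.card ≤ k) : ∑ i ∈ T, |y i| ≤ k • c :=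
    (Finset.sum_le_card_nsmul T _ c fun i hi ↦ hbound i (hT hi)).trans
      (nsmul_le_nsmul_left hc hTk)
  have hle : ∑ i ∈ P, |y i| ≤ k • c := by
    rcases le_or_gt P.card k with h | h
    · exact hsmall (Finset.filter_subset _ _) h
    · exact hPQ ▸ hsmall (Finset.filter_subset _ _) (by lia)
  calc ∑ i ∈ s, |y i| = ∑ i ∈ P, |y i| + ∑ i ∈ P, |y i| := by rw [← hsplit, ← hPQ]
    _ ≤ k • c + k • c := add_le_add hle hle
    _ = (s.card - 1) * c := by
      rw [hk, nsmul_eq_mul]; push_cast; noncomm_ring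

variable [CommRing R] [LinearOrder R] [IsStrictOrderedRing R]

theorem mul_add_mul_le_mul_one_add_abs_sub {p q x y c : R} (hp : 0 ≤ p) (hq : 0 ≤ q)
    (hpq : p + q = 2 * c) (hxy : x + y = 1) : p * x + q * y ≤ c * (1 + |x - y|) := by
  have hdiff : (p - q) * (x - y) ≤ 2 * c * |x - y| :=
    calc (p - q) * (x - y) ≤ |p - q| * |x - y| := (le_abs_self _).trans_eq (abs_mul _ _)
      _ ≤ 2 * c * |x - y| := by
        gcongr
        exact abs_le.mpr ⟨by linarith, by linarith⟩
  have hpolar : 2 * (p * x + q * y) = 2 * c + (p - q) * (x - y) := by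
    linear_combination (p + q) * hxy + hpq
  linarith

theorem sum_mul_add_mul_le_of_odd_card {p q x y : ι → R} {c : R} (hs : Odd s.card)
    (hp : ∀ i ∈ s, 0 ≤ p i) (hq : ∀ i ∈ s, 0 ≤ q i) (hpq : ∀ i ∈ s, p i + q i = 2 * c)
    (hx : ∀ i ∈ s, 0 ≤ x i) (hy : ∀ i ∈ s, 0 ≤ y i) (hxy : ∀ i ∈ s, x i + y i = 1)
    (hsum : ∑ i ∈ s, x i = ∑ i ∈ s, y i) :
    ∑ i ∈ s, (p i * x i + q i * y i) ≤ (2 * s.card - 1) * c := by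
  obtain ⟨i₀, hi₀⟩ : s.Nonempty := Finset.card_pos.mp hs.pos
  have hc : 0 ≤ c := by linarith [hp i₀ hi₀, hq i₀ hi₀, hpq i₀ hi₀]
  have hdiff : ∑ i ∈ s, |x i - y i| ≤ (s.card - 1) * 1 :=
    sum_abs_le_of_sum_eq_zero_of_odd_card hs
      (fun i hi ↦ abs_le.mpr ⟨by linarith [hx i hi, hxy i hi], by linarith [hy i hi, hxy i hi]⟩)
      (by rw [Finset.sum_sub_distrib, hsum, sub_self])
  calc ∑ i ∈ s, (p i * x i + q i * y i) ≤ ∑ i ∈ s, c * (1 + |x i - y i|) :=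
        Finset.sum_le_sum fun i hi ↦
          mul_add_mul_le_mul_one_add_abs_sub (hp i hi) (hq i hi) (hpq i hi) (hxy i hi)
    _ = c * (s.card + ∑ i ∈ s, |x i - y i|) := by
        rw [← Finset.mul_sum, Finset.sum_add_distrib, Finset.sum_const, nsmul_one]
    _ ≤ c * (s.card + (s.card - 1) * 1) := by gcongr
    _ = (2 * s.card - 1) * c := by ring

end OrderedRing

section Trace

variable {n 𝕜 : Type*} [Fintype n] [RCLike 𝕜]

open scoped MatrixOrder in
theorem trace_mul_nonneg_of_posSemidef {A B : Matrix n n 𝕜} (hA : A.PosSemidef)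
    (hB : B.PosSemidef) : 0 ≤ (A * B).trace := by
  classical
  obtain ⟨C, rfl⟩ := CStarAlgebra.nonneg_iff_eq_star_mul_self.mp hA.nonneg
  rw [mul_assoc, Matrix.trace_mul_comm]
  exact (hB.mul_mul_conjTranspose_same C).trace_nonneg

/-- The real-linear functional `A ↦ Re Tr (A B)` on complex matrices, through which the operators
of a noncontextual model act on preparations and on effects. -/
def reTraceMul (B : Matrix n n ℂ) : Matrix n n ℂ →ₗ[ℝ] ℝ :=
  Complex.reLm ∘ₗ Matrix.traceLinearMap n ℝ ℂ ∘ₗ LinearMap.mulRight ℝ B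

theorem reTraceMul_apply (A B : Matrix n n ℂ) : reTraceMul B A = (A * B).trace.re := rfl

theorem ofReal_reTraceMul {A B : Matrix n n ℂ} (h : 0 ≤ (A * B).trace) :
    (reTraceMul B A : ℂ) = (A * B).trace :=
  (Complex.eq_re_of_ofReal_le (mod_cast h)).symm

end Trace

variable {d : ℕ} {K : Set (Matrix (Fin d) (Fin d) ℂ)}

theorem coneOf_subset_span : coneOf K ⊆ Submodule.span ℝ K := by
  rintro _ ⟨μ, ρ, -, hρ, rfl⟩
  rw [Complex.coe_smul]
  exact Submodule.smul_mem _ μ (Submodule.subset_span hρ)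

theorem HasNCModel.exists_linear_model (hK : HasNCModel K) :
    ∃ (L : ℕ) (p q : Fin L → Matrix (Fin d) (Fin d) ℂ →ₗ[ℝ] ℝ),
      (∀ l, ∀ A ∈ coneOf K, 0 ≤ p l A) ∧
      (∀ l M, M.PosSemidef → 0 ≤ q l M) ∧
      (∀ l, q l 1 = 1) ∧
      (∀ A ∈ Submodule.span ℝ K, ∀ M, M.PosSemidef → (1 - M).PosSemidef →
        (A * M).trace = (∑ l, p l A * q l M : ℝ)) := by
  obtain ⟨L, N, ω, -, hω, hN, -, hmodel⟩ := hK
  have hωM {l M} (hM : M.PosSemidef) : 0 ≤ (M * ω l).trace :=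
    trace_mul_nonneg_of_posSemidef hM (hω l).1
  refine ⟨L, fun l ↦ reTraceMul (N l), fun l ↦ reTraceMul (ω l), ?_, ?_, ?_, ?_⟩
  · rintro l _ ⟨μ, ρ, hμ, hρ, rfl⟩
    rw [Complex.coe_smul, map_smul, smul_eq_mul]
    exact mul_nonneg hμ (Complex.nonneg_iff.mp (hN ρ hρ l)).1
  · exact fun l M hM ↦ (Complex.nonneg_iff.mp (hωM hM)).1
  · intro l
    rw [reTraceMul_apply, one_mul, (hω l).2, Complex.one_re]
  · intro A hA M hM hM'
    induction hA using Submodule.span_induction with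
    | mem ρ hρ =>
      rw [hmodel ρ hρ M hM hM', Complex.ofReal_sum]
      refine Finset.sum_congr rfl fun l _ ↦ ?_
      rw [Complex.ofReal_mul, ofReal_reTraceMul (hN ρ hρ l), ofReal_reTraceMul (hωM hM),
        Matrix.trace_mul_comm M]
    | zero => simp
    | add A B _ _ hA hB =>
      simp only [add_mul, Matrix.trace_add, hA, hB, map_add, Finset.sum_add_distrib,
        Complex.ofReal_add]
    | smul c A _ hA =>
      simp only [Matrix.smul_mul, Matrix.trace_smul, hA, map_smul, smul_eq_mul, mul_assoc,
        ← Finset.mul_sum, Complex.real_smul, Complex.ofReal_mul]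

theorem noncontextuality_inequality_unnormalized_general {ι : Type*} [Fintype ι]
    (hι : Odd (Fintype.card ι)) (hK : HasNCModel K)
    (σ : ι → Fin 2 → Matrix (Fin d) (Fin d) ℂ) (σs : Matrix (Fin d) (Fin d) ℂ)
    (hσ : ∀ t b, σ t b ∈ coneOf K) (hmix : ∀ t, (1 / 2 : ℂ) • (σ t 0 + σ t 1) = σs)
    (M : ι → Fin 2 → Matrix (Fin d) (Fin d) ℂ) (hM : ∀ t b, (M t b).PosSemidef)
    (hMsum : ∀ t, M t 0 + M t 1 = 1) (hMavg : ∑ t, M t 0 = ∑ t, M t 1) :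
    ∑ t, ∑ b, (σ t b * M t b).trace ≤ (2 * Fintype.card ι - 1) * σs.trace := by
  obtain ⟨t₀⟩ : Nonempty ι := Fintype.card_pos_iff.mp hι.pos
  obtain ⟨L, p, q, hp, hq, hq_one, hmodel⟩ := hK.exists_linear_model
  have hmix_real (t) : σs = (1 / 2 : ℝ) • (σ t 0 + σ t 1) := by
    rw [← hmix t, ← Complex.coe_smul]; norm_num
  have hM_le_one (t) : ∀ b, (1 - M t b).PosSemidef :=
    Fin.forall_fin_two.mpr ⟨by simpa [← hMsum t] using hM t 1, by simpa [← hMsum t] using hM t 0⟩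
  have hσ_span (t b) : σ t b ∈ Submodule.span ℝ K := coneOf_subset_span (hσ t b)
  have hσs_span : σs ∈ Submodule.span ℝ K :=
    hmix_real t₀ ▸ Submodule.smul_mem _ _ (add_mem (hσ_span t₀ 0) (hσ_span t₀ 1))
  have htrace : σs.trace = (∑ l, p l σs : ℝ) := by
    simpa [hq_one] using hmodel σs hσs_span 1 .one (by simpa using Matrix.PosSemidef.zero)
  have hlocal (l) : ∑ t, ∑ b, p l (σ t b) * q l (M t b) ≤ (2 * Fintype.card ι - 1) * p l σs := by
    simp only [Fin.sum_univ_two]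
    refine sum_mul_add_mul_le_of_odd_card hι (fun t _ ↦ hp l _ (hσ t 0))
      (fun t _ ↦ hp l _ (hσ t 1)) (fun t _ ↦ ?_) (fun t _ ↦ hq l _ (hM t 0))
      (fun t _ ↦ hq l _ (hM t 1)) (fun t _ ↦ ?_) ?_
    · rw [hmix_real t, map_smul, map_add, smul_eq_mul]; ring
    · rw [← map_add, hMsum, hq_one]
    · rw [← map_sum, hMavg, map_sum]
  have hsum : ∑ t, ∑ b, ∑ l, p l (σ t b) * q l (M t b) ≤
      (2 * Fintype.card ι - 1) * ∑ l, p l σs := by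
    rw [Finset.sum_comm_cycle, Finset.mul_sum]
    exact Finset.sum_le_sum fun l _ ↦ hlocal l
  simp only [hmodel _ (hσ_span _ _) _ (hM _ _) (hM_le_one _ _), htrace]
  exact_mod_cast hsum

theorem noncontextuality_inequality_unnormalized {d : ℕ}
    (K : Set (Matrix (Fin d) (Fin d) ℂ)) (hK : HasNCModel K)
    (σ : Fin 3 → Fin 2 → Matrix (Fin d) (Fin d) ℂ)
    (σs : Matrix (Fin d) (Fin d) ℂ)
    (hσ : ∀ t b, σ t b ∈ coneOf K)
    (hmix : ∀ t, (1 / 2 : ℂ) • (σ t 0 + σ t 1) = σs)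
    (M : Fin 3 → Fin 2 → Matrix (Fin d) (Fin d) ℂ)
    (hM : ∀ t b, (M t b).PosSemidef)
    (hMsum : ∀ t, M t 0 + M t 1 = 1)
    (hMavg : ∀ b, (1 / 3 : ℂ) • ∑ t, M t b = (1 / 2 : ℂ) • (1 : Matrix (Fin d) (Fin d) ℂ)) :
    ∑ t, ∑ b, (σ t b * M t b).trace ≤ 5 * σs.trace := by
  have hMavg' : ∑ t, M t 0 = ∑ t, M t 1 :=
    smul_right_injective _ (by norm_num : (1 / 3 : ℂ) ≠ 0) ((hMavg 0).trans (hMavg 1).symm)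
  convert noncontextuality_inequality_unnormalized_general (by decide) hK σ σs hσ hmix M hM hMsum
    hMavg' using 2
  norm_num
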